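/- Let V be a finite set, f : 2^V → ℝ a monotone function with f(S) ≥ 0 for all S, a partition matroid constraint with d = Σ_i d_i and d̄ = min_i d_i, and OPT a feasible maximizer of f. Let h be an integer with 0 ≤ h < d̄, and let γ with 0 ≤ γ ≤ 1 be a submodularity-ratio lower bound for f with parameters (h+1, d). If X ⊆ V satisfies |X| ≤ h and f(X) ≥ [1 − (1 − γ/d)^h]·f(OPT), then for any element v*_X maximizing f(X∪{v}) over all v ∈ V∖X with X∪{v} feasible, the set X* = X∪{v*_X} is feasible, satisfies |X*| ≤ h+1, and f(X*) ≥ [1 − (1 − γ/d)^{h+1}]·f(OPT). -/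

import Mathlib

/-!
Every set of size at most `h + 1 ≤ d̄` is feasible, so the greedy element beats every single
addition to `X`. Adding all of `T \ X`, where `T` is feasible, reaches at least `f T` by
monotonicity, and `|T \ X| ≤ |T| ≤ d`. The submodularity ratio therefore forces some single
addition, and hence the greedy one, to close at least the fraction `γ / d` of the gap `f T - f X`.
A gap of at most `(1 - γ / d) ^ h * f T` thus shrinks to at most `(1 - γ / d) ^ (h + 1) * f T`.
-/

section GreedyStep

open Finset

variable {V ι : Type*} [DecidableEq V]

/-- Feasibility for block sets `B i` with thresholds `D i`: at most `D i` elements are taken from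
`B i`. When the blocks partition `V`, these are the independent sets of the partition matroid. -/
def IsFeasible (B : ι → Finset V) (D : ι → ℕ) (S : Finset V) : Prop :=
  ∀ i, #(S ∩ B i) ≤ D i

/-- `γ` is a lower bound for the submodularity ratio of `f` with parameters `(i, j)`: single-element
gains over a set of size less than `i` sum to at least `γ` times the joint gain of at most `j`
elements. The range `0 ≤ γ ≤ 1` is kept out of the predicate. -/
def IsSubmodularityRatioBound (f : Finset V → ℝ) (γ : ℝ) (i j : ℕ) : Prop :=
  ∀ S L : Finset V, Disjoint S L → #S < i → #L ≤ j →
    γ * (f (S ∪ L) - f S) ≤ ∑ v ∈ L, (f (insert v S) - f S)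

theorem isFeasible_of_card_le {B : ι → Finset V} {D : ι → ℕ} {S : Finset V}
    (hS : ∀ i, #S ≤ D i) : IsFeasible B D S :=
  fun i => (card_le_card inter_subset_left).trans (hS i)

theorem IsFeasible.card_le_sum [Fintype ι] {B : ι → Finset V} {D : ι → ℕ} {S : Finset V}
    (hS : IsFeasible B D S) (hcover : ∀ v ∈ S, ∃ i, v ∈ B i) : #S ≤ ∑ i, D i := by
  have hsub : S ⊆ univ.biUnion fun i => S ∩ B i := fun v hv => by
    simpa [hv] using hcover v hv
  calc #S ≤ #(univ.biUnion fun i => S ∩ B i) := card_le_card hsub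
    _ ≤ ∑ i, #(S ∩ B i) := card_biUnion_le
    _ ≤ ∑ i, D i := sum_le_sum fun i _ => hS i

namespace IsSubmodularityRatioBound

variable {f : Finset V → ℝ} {γ m : ℝ} {i j : ℕ} {X : Finset V}

theorem mul_sub_le_card_mul {L : Finset V} (hγ : IsSubmodularityRatioBound f γ i j)
    (hXL : Disjoint X L) (hX : #X < i) (hL : #L ≤ j) (hm : ∀ v ∈ L, f (insert v X) ≤ m) :
    γ * (f (X ∪ L) - f X) ≤ #L * (m - f X) :=
  calc γ * (f (X ∪ L) - f X) ≤ ∑ v ∈ L, (f (insert v X) - f X) := hγ X L hXL hX hL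
    _ ≤ #L • (m - f X) := sum_le_card_nsmul _ _ _ fun v hv => sub_le_sub_right (hm v hv) _
    _ = #L * (m - f X) := nsmul_eq_mul _ _

theorem mul_sub_le_mul_sub {T : Finset V} (hγ : IsSubmodularityRatioBound f γ i j)
    (hmono : Monotone f) (hγ0 : 0 ≤ γ) (hX : #X < i) (hT : #T ≤ j) (hXm : f X ≤ m)
    (hm : ∀ v ∈ T \ X, f (insert v X) ≤ m) :
    γ * (f T - f X) ≤ j * (m - f X) := by
  have hcard : #(T \ X) ≤ j := (card_le_card sdiff_subset).trans hT
  have hTX : f T ≤ f (X ∪ T \ X) := hmono (by simp)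
  calc γ * (f T - f X) ≤ γ * (f (X ∪ T \ X) - f X) := by gcongr
    _ ≤ #(T \ X) * (m - f X) := hγ.mul_sub_le_card_mul disjoint_sdiff hX hcard hm
    _ ≤ j * (m - f X) :=
      mul_le_mul_of_nonneg_right (Nat.cast_le.2 hcard) (sub_nonneg.2 hXm)

end IsSubmodularityRatioBound

theorem one_sub_pow_succ_mul_le {a b t c : ℝ} {n : ℕ} (hc : c ≤ 1)
    (ha : (1 - (1 - c) ^ n) * t ≤ a) (hgain : c * (t - a) ≤ b - a) :
    (1 - (1 - c) ^ (n + 1)) * t ≤ b :=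
  calc (1 - (1 - c) ^ (n + 1)) * t = c * t + (1 - c) * ((1 - (1 - c) ^ n) * t) := by ring
    _ ≤ c * t + (1 - c) * a :=
      add_le_add_right (mul_le_mul_of_nonneg_left ha (sub_nonneg.2 hc)) _
    _ ≤ b := by linarith

theorem greedy_step_monotone_general [Fintype ι] {B : ι → Finset V} {D : ι → ℕ}
    {f : Finset V → ℝ} {γ : ℝ} {h : ℕ} {T X : Finset V} {vstar : V}
    (hcover : ∀ v, ∃ i, v ∈ B i) (hD : ∀ i, h < D i) (hmono : Monotone f)
    (hT : IsFeasible B D T) (hγ0 : 0 ≤ γ) (hγ1 : γ ≤ 1)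
    (hγ : IsSubmodularityRatioBound f γ (h + 1) (∑ i, D i)) (hXcard : #X ≤ h)
    (hXval : (1 - (1 - γ / (∑ i, D i : ℝ)) ^ h) * f T ≤ f X)
    (hmax : ∀ w ∉ X, IsFeasible B D (insert w X) → f (insert w X) ≤ f (insert vstar X)) :
    IsFeasible B D (insert vstar X) ∧ #(insert vstar X) ≤ h + 1 ∧
      (1 - (1 - γ / (∑ i, D i : ℝ)) ^ (h + 1)) * f T ≤ f (insert vstar X) := by
  have hcard (w : V) : #(insert w X) ≤ h + 1 := (card_insert_le w X).trans (by gcongr)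
  have hfeas (w : V) : IsFeasible B D (insert w X) :=
    isFeasible_of_card_le fun i => (hcard w).trans (hD i)
  refine ⟨hfeas vstar, hcard vstar, ?_⟩
  have hd : (1 : ℝ) ≤ ∑ i, (D i : ℝ) := by
    obtain ⟨i, -⟩ := hcover vstar
    have hDi : D i ≤ ∑ i, D i := single_le_sum (fun _ _ => Nat.zero_le _) (mem_univ i)
    exact_mod_cast (Nat.one_le_of_lt (hD i)).trans hDi
  have hgap : γ * (f T - f X) ≤ (∑ i, (D i : ℝ)) * (f (insert vstar X) - f X) := by
    exact_mod_cast hγ.mul_sub_le_mul_sub hmono hγ0 (Nat.lt_succ_of_le hXcard)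
      (hT.card_le_sum fun v _ => hcover v) (hmono (subset_insert vstar X))
      fun v hv => hmax v (mem_sdiff.1 hv).2 (hfeas v)
  refine one_sub_pow_succ_mul_le (div_le_one_of_le₀ (hγ1.trans hd) (by positivity)) hXval ?_
  rwa [div_mul_eq_mul_div, div_le_iff₀' (zero_lt_one.trans_le hd)]

end GreedyStep

/-- Induction step for the monotone approximation guarantee: if `|X| ≤ h < d̄`,
`γ ∈ [0,1]` is a submodularity-ratio lower bound for `f` with parameters `(h+1, d)`,
and `f X ≥ [1-(1-γ/d)^h]·f OPT`, then for any greedy addition `v*` the set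
`X* = X ∪ {v*}` is feasible, has `|X*| ≤ h+1`, and satisfies
`f X* ≥ [1-(1-γ/d)^{h+1}]·f OPT`. -/
theorem greedy_step_monotone {V : Type*} [Fintype V] [DecidableEq V] {k : ℕ}
    (hk : 0 < k)
    (B : Fin k → Finset V) (hpart : ∀ v : V, ∃! i, v ∈ B i)
    (hBne : ∀ i, (B i).Nonempty)
    (D : Fin k → ℕ) (hD : ∀ i, 1 ≤ D i ∧ D i ≤ (B i).card)
    (dbar : ℕ)
    (hdbar : dbar = Finset.univ.inf' ⟨⟨0, hk⟩, Finset.mem_univ _⟩ D)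
    (f : Finset V → ℝ) (hf0 : ∀ S, 0 ≤ f S)
    (hmono : ∀ X Y : Finset V, X ⊆ Y → f X ≤ f Y)
    (OPT : Finset V) (hOPTfeas : ∀ i, (OPT ∩ B i).card ≤ D i)
    (hOPTmax : ∀ S : Finset V, (∀ i, (S ∩ B i).card ≤ D i) → f S ≤ f OPT)
    (h : ℕ) (hh : h < dbar)
    (γ : ℝ) (hγ0 : 0 ≤ γ) (hγ1 : γ ≤ 1)
    (hγ : ∀ S L : Finset V, Disjoint S L → S.card < h + 1 → L.card ≤ ∑ i, D i →
      γ * (f (S ∪ L) - f S) ≤ ∑ v ∈ L, (f (insert v S) - f S))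
    (X : Finset V) (hXcard : X.card ≤ h)
    (hXval : f X ≥ (1 - (1 - γ / (∑ i, D i : ℝ)) ^ h) * f OPT)
    (vstar : V) (hv_notmem : vstar ∉ X)
    (hv_feas : ∀ i, ((insert vstar X) ∩ B i).card ≤ D i)
    (hv_max : ∀ w ∉ X, (∀ i, ((insert w X) ∩ B i).card ≤ D i) →
      f (insert w X) ≤ f (insert vstar X)) :
    (∀ i, ((insert vstar X) ∩ B i).card ≤ D i) ∧
    (insert vstar X).card ≤ h + 1 ∧
    f (insert vstar X) ≥ (1 - (1 - γ / (∑ i, D i : ℝ)) ^ (h + 1)) * f OPT :=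
  greedy_step_monotone_general (fun v => (hpart v).exists)
    (fun i => hh.trans_le (hdbar ▸ Finset.inf'_le D (Finset.mem_univ i)))
    (fun X Y => hmono X Y) hOPTfeas hγ0 hγ1 hγ hXcard hXval hv_max
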